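/- Let q be a prime power and let ν, m₁, m₂, t be positive integers with m₁ ≥ m₂ ≥ t+1 and 2ν ≥ 2m₁ + m₂ + t + 2. If m₂ ≤ 2t and (m₁,m₂,t) ∉ {(2,2,1), (3,2,1)}, then c₁(ν,m₁,m₂,t) < c₂(ν,m₁,m₂,t). -/

import Mathlib

open Finset Module

noncomputable section

/-- Gaussian binomial coefficient `[n choose k]_q` as a rational number. -/
def gaussBinom (q n k : ℕ) : ℚ :=
  ∏ i ∈ Finset.range k, ((q : ℚ) ^ ((n : ℤ) - i) - 1) / ((q : ℚ) ^ ((k : ℤ) - i) - 1)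

/-- `N'(a; m; 2ν)`, the number of `m`-dim totally isotropic subspaces containing
a fixed `a`-dim one. -/
def Nprime (q a m ν : ℕ) : ℚ :=
  ∏ i ∈ Finset.Icc 1 (m - a), ((q : ℚ) ^ (2 * ((ν : ℤ) - m + i)) - 1) / ((q : ℚ) ^ (i : ℤ) - 1)

variable {K V : Type*} [Field K] [AddCommGroup V] [Module K V]

/-- A subspace is totally isotropic w.r.t. the bilinear form `f`. -/
def TotallyIsotropic (f : V →ₗ[K] V →ₗ[K] K) (W : Submodule K V) : Prop :=
  ∀ x ∈ W, ∀ y ∈ W, f x y = 0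

/-- `polar f m` = `𝒫_m`, the set of `m`-dimensional totally isotropic subspaces. -/
def polar (f : V →ₗ[K] V →ₗ[K] K) (m : ℕ) : Set (Submodule K V) :=
  {W | TotallyIsotropic f W ∧ finrank K W = m}

/-- `X` is a `t`-cover of the family `ℱ`. -/
def IsTCover (f : V →ₗ[K] V →ₗ[K] K) (t : ℕ) (ℱ : Set (Submodule K V))
    (X : Submodule K V) : Prop :=
  TotallyIsotropic f X ∧ ∀ F ∈ ℱ, t ≤ finrank K ↥(X ⊓ F)

/-- `τ_t(ℱ)`, the minimum dimension of a `t`-cover of `ℱ`. -/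
def tauCover (f : V →ₗ[K] V →ₗ[K] K) (t : ℕ) (ℱ : Set (Submodule K V)) : ℕ :=
  sInf {x | ∃ X, IsTCover f t ℱ X ∧ finrank K ↥X = x}

def C1 (f : V →ₗ[K] V →ₗ[K] K) (M T : Submodule K V) (m t : ℕ) : Set (Submodule K V) :=
  {F | F ∈ polar f m ∧ T ≤ F ∧ t + 1 ≤ finrank K ↥(F ⊓ M)}

def C2 (f : V →ₗ[K] V →ₗ[K] K) (M T : Submodule K V) (m : ℕ) : Set (Submodule K V) :=
  {F | F ∈ polar f m ∧ T ≤ F} ∪ {F | F ∈ polar f m ∧ F ≤ M}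

def C3 (f : V →ₗ[K] V →ₗ[K] K) (S : Submodule K V) (m : ℕ) : Set (Submodule K V) :=
  {F | F ∈ polar f m ∧ S ≤ F}

def C4 (f : V →ₗ[K] V →ₗ[K] K) (S : Submodule K V) (m t : ℕ) : Set (Submodule K V) :=
  {F | F ∈ polar f m ∧ t ≤ finrank K ↥(F ⊓ S)}

def s0 (q ν m s t : ℕ) : ℚ :=
  gaussBinom q (s - t) 1 * Nprime q (t + 1) m ν - q * gaussBinom q (s - t) 2 * Nprime q (t + 2) m ν

/-!
Write `[k]` for the `q`-number `1 + q + ⋯ + q ^ (k - 1)` and `N(a; m)` for the number of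
`m`-dimensional totally isotropic subspaces containing a fixed one of dimension `a`; double counting
gives `[m - a] N(a; m) = [2ν - 2a] N(a + 1; m)`, so `N(a; m)` drops by a large power of `q` as
`a` grows by one. The family `C1` is the union of the `C3 P` over the `[m₂ + 1 - t]` points `P` of
`M / T`, and `C4` is partitioned by `C3 S` and the `[t + 1]` hyperplanes of `S`.

If `m₂ < 2t`, then `[m₂ + 1 - t] ≤ [t] < [t + 1]`, and the leading terms already decide. If
`m₂ = 2t`, the leading terms `[t + 1] N(t + 1; m₁) N(t; m₂)` agree, and one compares the terms
`q [t] N(t + 2; m₁) N(t; m₂)` and `q [t] N(t + 1; m₁) N(t + 1; m₂)` which inclusion-exclusion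
subtracts on the two sides: by the recursion the first is larger by
enough to absorb the `[2t + 1]` hyperplanes of `M` in `C2`.
-/

section QNumber

/-- The `q`-number `[k]_q = 1 + q + ⋯ + q ^ (k - 1)`, which counts the points of the projective
space of `𝔽_q ^ k`. It is `gaussBinom q k 1`, kept in `ℕ` so that counts can be stated without
casts. -/
def qNumber (q k : ℕ) : ℕ := ∑ i ∈ range k, q ^ i

variable {q : ℕ}

lemma qNumber_succ (q k : ℕ) : qNumber q (k + 1) = q * qNumber q k + 1 := geom_sum_succ

lemma qNumber_succ' (q k : ℕ) : qNumber q (k + 1) = qNumber q k + q ^ k := sum_range_succ _ k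

lemma qNumber_pos {k : ℕ} (hk : 0 < k) : 0 < qNumber q k := by
  obtain ⟨j, rfl⟩ := Nat.exists_eq_add_of_lt hk
  simp [qNumber_succ]

lemma qNumber_mono (q : ℕ) : Monotone (qNumber q) :=
  monotone_nat_of_le_succ fun k ↦ by simp [qNumber_succ']

lemma qNumber_lt_pow (hq : 2 ≤ q) (k : ℕ) : qNumber q k < q ^ k :=
  Nat.geomSum_lt hq fun _ ↦ mem_range.mp

lemma pow_mul_qNumber_le (q d k : ℕ) : q ^ d * qNumber q k ≤ qNumber q (k + d) := by
  rw [qNumber, qNumber, add_comm k d, sum_range_add, mul_sum]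
  simp only [pow_add]
  exact Nat.le_add_left _ _

lemma cast_qNumber_mul {R : Type*} [CommRing R] (q k : ℕ) :
    (qNumber q k : R) * (q - 1) = q ^ k - 1 := by
  simpa [qNumber] using geom_sum_mul (q : R) k

end QNumber

section Nprime

variable {q a m ν : ℕ}

lemma Nprime_self (q m ν : ℕ) : Nprime q m m ν = 1 := by
  simp [Nprime]

lemma Nprime_mul_qNumber (hq : 2 ≤ q) (ham : a < m) (haν : a ≤ ν) :
    Nprime q a m ν * qNumber q (m - a) =
      qNumber q (2 * ν - 2 * a) * Nprime q (a + 1) m ν := by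
  have hq1 : (q : ℚ) - 1 ≠ 0 := by
    have : (2 : ℚ) ≤ q := by exact_mod_cast hq
    linarith
  obtain ⟨d, rfl⟩ := Nat.exists_eq_add_of_lt ham
  obtain ⟨e, rfl⟩ := Nat.exists_eq_add_of_le haν
  have hden : (q : ℚ) ^ (d + 1) - 1 ≠ 0 :=
    sub_ne_zero.2 (one_lt_pow₀ (by exact_mod_cast hq) d.succ_ne_zero).ne'
  have hexp : 2 * (((a + e : ℕ) : ℤ) - (a + d + 1 : ℕ) + (d + 1 : ℕ)) = (2 * e : ℕ) := by
    push_cast; ring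
  have htop : Nprime q a (a + d + 1) (a + e) * ((q : ℚ) ^ (d + 1) - 1) =
      ((q : ℚ) ^ (2 * e) - 1) * Nprime q (a + 1) (a + d + 1) (a + e) := by
    rw [Nprime, show a + d + 1 - a = d + 1 by lia, prod_Icc_succ_top (by lia), hexp, Nprime,
      show a + d + 1 - (a + 1) = d by lia, zpow_natCast, zpow_natCast]
    field_simp
  apply mul_right_cancel₀ hq1
  rw [show a + d + 1 - a = d + 1 by lia, show 2 * (a + e) - 2 * a = 2 * e by lia, mul_assoc,
    cast_qNumber_mul, htop, ← cast_qNumber_mul]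
  ring

lemma one_le_Nprime (hq : 2 ≤ q) (hm : m ≤ ν) : 1 ≤ Nprime q a m ν := by
  have hq1 : (1 : ℚ) < q := by exact_mod_cast hq
  refine one_le_prod fun i hi ↦ ?_
  have hi1 : 1 ≤ i := (mem_Icc.1 hi).1
  rw [one_le_div (sub_pos.2 (one_lt_zpow₀ hq1 (by lia)))]
  gcongr
  · exact hq1.le
  · lia

lemma Nprime_pos (hq : 2 ≤ q) (hm : m ≤ ν) : 0 < Nprime q a m ν :=
  one_pos.trans_le (one_le_Nprime hq hm)

lemma pow_mul_Nprime_succ_le {d : ℕ} (hq : 2 ≤ q) (ham : a < m) (hm : m ≤ ν)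
    (hd : d + m + a ≤ 2 * ν) : (q : ℚ) ^ d * Nprime q (a + 1) m ν ≤ Nprime q a m ν := by
  have hpos : (0 : ℚ) < qNumber q (m - a) := by exact_mod_cast qNumber_pos (by lia)
  have hratio : (q : ℚ) ^ d * qNumber q (m - a) ≤ qNumber q (2 * ν - 2 * a) := by
    exact_mod_cast (pow_mul_qNumber_le q d (m - a)).trans (qNumber_mono q (by lia))
  refine le_of_mul_le_mul_right ?_ hpos
  calc (q : ℚ) ^ d * Nprime q (a + 1) m ν * qNumber q (m - a)
      = (q : ℚ) ^ d * qNumber q (m - a) * Nprime q (a + 1) m ν := by ring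
    _ ≤ qNumber q (2 * ν - 2 * a) * Nprime q (a + 1) m ν := by
      gcongr
      exact (Nprime_pos hq hm).le
    _ = Nprime q a m ν * qNumber q (m - a) := (Nprime_mul_qNumber hq ham (by lia)).symm

end Nprime

section Counting

variable {α β : Type*}

lemma ncard_mul_eq_ncard_mul {R : Type*} [Semiring R] [Finite α] [Finite β] {s : Set α}
    {t : Set β} (r : α → β → Prop) {m n : R} (hm : ∀ a ∈ s, ({b ∈ t | r a b}.ncard : R) = m)
    (hn : ∀ b ∈ t, ({a ∈ s | r a b}.ncard : R) = n) : s.ncard * m = t.ncard * n := by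
  classical
  have := Fintype.ofFinite α
  have := Fintype.ofFinite β
  have habove (a : α) : #(t.toFinset.bipartiteAbove r a) = {b ∈ t | r a b}.ncard := by
    rw [← Set.ncard_coe_finset, coe_bipartiteAbove]
    simp
  have hbelow (b : β) : #(s.toFinset.bipartiteBelow r b) = {a ∈ s | r a b}.ncard := by
    rw [← Set.ncard_coe_finset, coe_bipartiteBelow]
    simp
  have hsum := congrArg (Nat.cast (R := R))
    (sum_card_bipartiteAbove_eq_sum_card_bipartiteBelow (s := s.toFinset) (t := t.toFinset) r)
  simp only [Nat.cast_sum, habove, hbelow] at hsum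
  rwa [sum_congr rfl fun a ha ↦ hm a (Set.mem_toFinset.1 ha),
    sum_congr rfl fun b hb ↦ hn b (Set.mem_toFinset.1 hb), sum_const, sum_const, nsmul_eq_mul,
    nsmul_eq_mul, ← Set.ncard_eq_toFinset_card', ← Set.ncard_eq_toFinset_card'] at hsum

lemma ncard_biUnion_le_mul {s : Set α} (hs : s.Finite) {A : α → Set β} {c : ℚ}
    (hA : ∀ i ∈ s, ((A i).ncard : ℚ) ≤ c) : ((⋃ i ∈ s, A i).ncard : ℚ) ≤ s.ncard * c := by
  have hsum := hs.ncard_biUnion_le A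
  rw [finsum_mem_eq_finite_toFinset_sum _ hs] at hsum
  calc ((⋃ i ∈ s, A i).ncard : ℚ) ≤ ∑ i ∈ hs.toFinset, ((A i).ncard : ℚ) := by
        exact_mod_cast hsum
    _ ≤ ∑ _i ∈ hs.toFinset, c := sum_le_sum fun i hi ↦ hA i (hs.mem_toFinset.1 hi)
    _ = s.ncard * c := by rw [sum_const, nsmul_eq_mul, Set.ncard_eq_toFinset_card s hs]

lemma ncard_biUnion_eq_mul [Finite β] {s : Set α} (hs : s.Finite) {A : α → Set β} {c : ℚ}
    (hdisj : s.PairwiseDisjoint A) (hA : ∀ i ∈ s, ((A i).ncard : ℚ) = c) :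
    ((⋃ i ∈ s, A i).ncard : ℚ) = s.ncard * c := by
  rw [hs.ncard_biUnion (fun i _ ↦ (A i).toFinite) hdisj, finsum_mem_eq_finite_toFinset_sum _ hs,
    Nat.cast_sum, sum_congr rfl fun i hi ↦ hA i (hs.mem_toFinset.1 hi), sum_const, nsmul_eq_mul,
    Set.ncard_eq_toFinset_card s hs]

end Counting

section Subspaces

/-- The subspaces `P` with `T ≤ P ≤ M` of dimension one more than `T`: the points of the
projective space of `M / T`. -/
def extensions (T M : Submodule K V) : Set (Submodule K V) :=
  {P | T ≤ P ∧ P ≤ M ∧ finrank K P = finrank K T + 1}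

/-- The hyperplanes of `M`, as subspaces of the ambient space. -/
def hyperplanes (M : Submodule K V) : Set (Submodule K V) :=
  {H | H ≤ M ∧ finrank K H + 1 = finrank K M}

instance finite_submodule [Finite K] [FiniteDimensional K V] : Finite (Submodule K V) :=
  have : Finite V := Module.finite_of_finite K
  inferInstance

variable [FiniteDimensional K V] {T M P Q F : Submodule K V} {x : V}

lemma sup_span_singleton_eq (hP : P ∈ extensions T M) (hxP : x ∈ P) (hxT : x ∉ T) :
    T ⊔ K ∙ x = P :=
  Submodule.eq_of_le_of_finrank_eq
    (sup_le hP.1 ((Submodule.span_singleton_le_iff_mem x P).2 hxP))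
    (by rw [Submodule.finrank_sup_span_singleton hxT, hP.2.2])

lemma sup_span_singleton_mem_extensions (hTM : T ≤ M) (hxM : x ∈ M) (hxT : x ∉ T) :
    T ⊔ K ∙ x ∈ extensions T M :=
  ⟨le_sup_left, sup_le hTM ((Submodule.span_singleton_le_iff_mem x M).2 hxM),
    Submodule.finrank_sup_span_singleton hxT⟩

lemma exists_mem_notMem_of_finrank_lt (h : finrank K T < finrank K M) : ∃ x ∈ M, x ∉ T :=
  SetLike.not_le_iff_exists.1 fun hMT ↦ (Submodule.finrank_mono hMT).not_gt h

lemma extensions_nonempty (hTM : T ≤ M) (h : finrank K T < finrank K M) :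
    (extensions T M).Nonempty := by
  obtain ⟨x, hxM, hxT⟩ := exists_mem_notMem_of_finrank_lt h
  exact ⟨_, sup_span_singleton_mem_extensions hTM hxM hxT⟩

lemma finrank_sup_of_mem_extensions (hP : P ∈ extensions T M) (hQ : Q ∈ extensions T M)
    (hPQ : P ≠ Q) : finrank K ↥(P ⊔ Q) = finrank K T + 2 := by
  have hQP : ¬ Q ≤ P := fun h ↦
    hPQ (Submodule.eq_of_le_of_finrank_eq h (hQ.2.2.trans hP.2.2.symm)).symm
  obtain ⟨x, hxQ, hxP⟩ := SetLike.not_le_iff_exists.1 hQP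
  have hsup : P ⊔ Q = P ⊔ K ∙ x := by
    rw [← sup_span_singleton_eq hQ hxQ fun hxT ↦ hxP (hP.1 hxT), ← sup_assoc,
      sup_eq_left.2 hP.1]
  rw [hsup, Submodule.finrank_sup_span_singleton hxP, hP.2.2]

lemma inf_eq_of_mem_hyperplanes {H S : Submodule K V} (hH : H ∈ hyperplanes S) (hHF : H ≤ F)
    (hSF : ¬ S ≤ F) : F ⊓ S = H := by
  have hlt : finrank K ↥(F ⊓ S) < finrank K S :=
    Submodule.finrank_lt_finrank_of_lt
      (lt_of_le_of_ne inf_le_right fun h ↦ hSF (inf_eq_right.1 h))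
  have hdim := hH.2
  exact (Submodule.eq_of_le_of_finrank_le (le_inf hHF hH.1) (by lia)).symm

variable [Finite K]

lemma ncard_sdiff_submodule (hTM : T ≤ M) :
    ((M : Set V) \ T).ncard = Nat.card K ^ finrank K M - Nat.card K ^ finrank K T := by
  have : Finite V := Module.finite_of_finite K
  rw [Set.ncard_sdiff hTM, ← Nat.card_coe_set_eq, ← Nat.card_coe_set_eq,
    ← Module.natCard_eq_pow_finrank, ← Module.natCard_eq_pow_finrank]
  rfl

lemma ncard_extensions (hTM : T ≤ M) :
    (extensions T M).ncard = qNumber (Nat.card K) (finrank K M - finrank K T) := by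
  have : Finite V := Module.finite_of_finite K
  have hq : 1 < Nat.card K := Finite.one_lt_card
  obtain ⟨d, hd⟩ := Nat.exists_eq_add_of_le (Submodule.finrank_mono hTM)
  -- Every vector of `M \ T` lies in exactly one extension of `T`.
  have hcount : ((M : Set V) \ T).ncard * 1 = (extensions T M).ncard *
      (Nat.card K ^ (finrank K T + 1) - Nat.card K ^ finrank K T) := by
    refine ncard_mul_eq_ncard_mul (fun x P ↦ x ∈ P) (fun x hx ↦ ?_) fun P hP ↦ ?_
    · rw [Nat.cast_id, Set.ncard_eq_one]
      refine ⟨T ⊔ K ∙ x, Set.eq_singleton_iff_unique_mem.2 ⟨⟨?_, ?_⟩, fun P hP ↦ ?_⟩⟩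
      · exact sup_span_singleton_mem_extensions hTM hx.1 hx.2
      · exact Submodule.mem_sup_right (Submodule.mem_span_singleton_self x)
      · exact (sup_span_singleton_eq hP.1 hP.2 hx.2).symm
    · rw [Nat.cast_id, ← hP.2.2, ← ncard_sdiff_submodule hP.1]
      congr 1
      ext x
      exact ⟨fun h ↦ ⟨h.2, h.1.2⟩, fun h ↦ ⟨⟨hP.2.1 h.1, h.2⟩, h.1⟩⟩
  rw [mul_one, ncard_sdiff_submodule hTM, hd] at hcount
  have hpos : 0 < Nat.card K ^ finrank K T * (Nat.card K - 1) :=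
    Nat.mul_pos (by positivity) (by lia)
  apply Nat.eq_of_mul_eq_mul_right hpos
  have hgeom := cast_qNumber_mul (R := ℤ) (Nat.card K) d
  rw [hd, Nat.add_sub_cancel_left]
  zify [hq.le, Nat.pow_le_pow_right hq.le (Nat.le_add_right (finrank K T) d),
    Nat.pow_le_pow_right hq.le (Nat.le_succ (finrank K T))] at hcount ⊢
  linear_combination -hcount - (Nat.card K : ℤ) ^ finrank K T * hgeom

lemma ncard_hyperplanes (M : Submodule K V) :
    (hyperplanes M).ncard = qNumber (Nat.card K) (finrank K M) := by
  have hdim (W : Submodule K V) := Subspace.finrank_add_finrank_dualAnnihilator_eq W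
  have hM := hdim M
  have himage : Submodule.dualAnnihilator '' hyperplanes M =
      extensions M.dualAnnihilator ⊤ := by
    ext P
    constructor
    · rintro ⟨H, ⟨hHM, hH⟩, rfl⟩
      have hHdim := hdim H
      exact ⟨Submodule.dualAnnihilator_anti hHM, le_top, by lia⟩
    · rintro ⟨hMP, -, hP⟩
      have hPdim := hdim P.dualCoannihilator
      rw [Subspace.dualCoannihilator_dualAnnihilator_eq] at hPdim
      refine ⟨P.dualCoannihilator, ⟨?_, by lia⟩, Subspace.dualCoannihilator_dualAnnihilator_eq⟩
      simpa only [Subspace.dualAnnihilator_dualCoannihilator_eq]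
        using Submodule.dualCoannihilator_anti hMP
  rw [← Set.ncard_image_of_injective _ fun _ _ ↦ Subspace.dualAnnihilator_inj.1, himage,
    ncard_extensions le_top, finrank_top, Subspace.dual_finrank_eq]
  congr 1
  lia

end Subspaces

section Isotropic

variable {f : LinearMap.BilinForm K V} {A B T M P F S : Submodule K V} {a m t : ℕ}

lemma TotallyIsotropic.mono (hB : TotallyIsotropic f B) (h : A ≤ B) : TotallyIsotropic f A :=
  fun x hx y hy ↦ hB x (h hx) y (h hy)

lemma TotallyIsotropic.le_orthogonal (hB : TotallyIsotropic f B) (h : A ≤ B) :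
    B ≤ f.orthogonal A :=
  fun x hx y hy ↦ hB y (h hy) x hx

lemma TotallyIsotropic.sup_span_singleton (hf : f.IsAlt) (hA : TotallyIsotropic f A) {x : V}
    (hx : x ∈ f.orthogonal A) : TotallyIsotropic f (A ⊔ K ∙ x) := by
  intro u hu v hv
  obtain ⟨a, ha, _, hb, rfl⟩ := Submodule.mem_sup.1 hu
  obtain ⟨c, hc, _, hd, rfl⟩ := Submodule.mem_sup.1 hv
  obtain ⟨β, rfl⟩ := Submodule.mem_span_singleton.1 hb
  obtain ⟨δ, rfl⟩ := Submodule.mem_span_singleton.1 hd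
  have hax : f a x = 0 := hx a ha
  have hxc : f x c = 0 := hf.isRefl c x (hx c hc)
  simp [hA a ha c hc, hax, hxc, hf.self_eq_zero x]

lemma C3_inter_C3 (f : LinearMap.BilinForm K V) (A B : Submodule K V) (m : ℕ) :
    C3 f A m ∩ C3 f B m = C3 f (A ⊔ B) m := by
  ext F
  simp only [C3, Set.mem_inter_iff, Set.mem_ofPred_eq, sup_le_iff]
  tauto

lemma C3_anti (h : A ≤ B) (m : ℕ) : C3 f B m ⊆ C3 f A m :=
  fun _ hF ↦ ⟨hF.1, h.trans hF.2⟩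

variable [FiniteDimensional K V]

lemma TotallyIsotropic.two_mul_finrank_le (hf : f.Nondegenerate) (hA : TotallyIsotropic f A) :
    2 * finrank K A ≤ finrank K V := by
  have h := Submodule.finrank_mono (hA.le_orthogonal le_rfl)
  rw [LinearMap.BilinForm.finrank_orthogonal hf] at h
  lia

lemma C3_finrank (hA : TotallyIsotropic f A) : C3 f A (finrank K A) = {A} :=
  Set.eq_singleton_iff_unique_mem.2 ⟨⟨⟨hA, rfl⟩, le_rfl⟩, fun _ hF ↦
    (Submodule.eq_of_le_of_finrank_eq hF.2 hF.1.2.symm).symm⟩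

lemma C3_finrank_add_one (hf : f.IsAlt) (hA : TotallyIsotropic f A) :
    C3 f A (finrank K A + 1) = extensions A (f.orthogonal A) := by
  ext P
  constructor
  · rintro ⟨⟨hP, hdim⟩, hAP⟩
    exact ⟨hAP, hP.le_orthogonal hAP, hdim⟩
  · intro hP
    obtain ⟨x, hxP, hxA⟩ :=
      exists_mem_notMem_of_finrank_lt (T := A) (M := P) (by rw [hP.2.2]; lia)
    refine ⟨⟨?_, hP.2.2⟩, hP.1⟩
    rw [← sup_span_singleton_eq hP hxP hxA]
    exact hA.sup_span_singleton hf (hP.2.1 hxP)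

lemma C1_eq_biUnion (hTM : T ≤ M) :
    C1 f M T m (finrank K T) = ⋃ P ∈ extensions T M, C3 f P m := by
  ext F
  simp only [Set.mem_iUnion₂, exists_prop]
  constructor
  · rintro ⟨hF, hTF, hdim⟩
    obtain ⟨P, hTP, hPFM, hP⟩ := extensions_nonempty (le_inf hTF hTM) hdim
    exact ⟨P, ⟨hTP, hPFM.trans inf_le_right, hP⟩, hF, hPFM.trans inf_le_left⟩
  · rintro ⟨P, ⟨hTP, hPM, hP⟩, hF, hPF⟩
    exact ⟨hF, hTP.trans hPF, hP ▸ Submodule.finrank_mono (le_inf hPF hPM)⟩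

lemma C4_eq_union (hS : finrank K S = t + 1) :
    C4 f S m t = C3 f S m ∪ ⋃ H ∈ hyperplanes S, (C3 f H m \ C3 f S m) := by
  ext F
  simp only [Set.mem_union, Set.mem_iUnion₂, exists_prop]
  constructor
  · rintro ⟨hF, ht⟩
    refine or_iff_not_imp_left.2 fun hFS ↦ ⟨F ⊓ S, ⟨inf_le_right, ?_⟩, ⟨hF, inf_le_left⟩, hFS⟩
    have hlt : F ⊓ S < S :=
      lt_of_le_of_ne inf_le_right fun h ↦ hFS ⟨hF, inf_eq_right.1 h⟩
    have := Submodule.finrank_lt_finrank_of_lt hlt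
    lia
  · rintro (⟨hF, hSF⟩ | ⟨H, ⟨hHS, hH⟩, ⟨hF, hHF⟩, -⟩)
    · exact ⟨hF, by rw [inf_eq_right.2 hSF]; lia⟩
    · have := Submodule.finrank_mono (le_inf hHF hHS)
      exact ⟨hF, by lia⟩

lemma pairwiseDisjoint_C3_sdiff_C3 (f : LinearMap.BilinForm K V) (S : Submodule K V) (m : ℕ) :
    (hyperplanes S).PairwiseDisjoint fun H ↦ C3 f H m \ C3 f S m := by
  intro H hH H' hH' hne
  refine Set.disjoint_left.2 fun F hF hF' ↦ hne ?_
  have hSF : ¬ S ≤ F := fun h ↦ hF.2 ⟨hF.1.1, h⟩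
  exact (inf_eq_of_mem_hyperplanes hH hF.1.2 hSF).symm.trans
    (inf_eq_of_mem_hyperplanes hH' hF'.1.2 hSF)

variable [Finite K]

-- Double counting of the flags `A < P ≤ F` with `dim P = dim A + 1`.
lemma ncard_C3_mul_qNumber (hf : f.IsAlt) (hf' : f.Nondegenerate) (hA : TotallyIsotropic f A)
    {c : ℚ} (hc : ∀ P ∈ C3 f A (finrank K A + 1), ((C3 f P m).ncard : ℚ) = c) :
    (C3 f A m).ncard * qNumber (Nat.card K) (m - finrank K A) =
      qNumber (Nat.card K) (finrank K V - 2 * finrank K A) * c := by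
  have hpoints : (C3 f A (finrank K A + 1)).ncard =
      qNumber (Nat.card K) (finrank K V - 2 * finrank K A) := by
    rw [C3_finrank_add_one hf hA, ncard_extensions (hA.le_orthogonal le_rfl),
      LinearMap.BilinForm.finrank_orthogonal hf']
    congr 1
    lia
  rw [← hpoints]
  refine ncard_mul_eq_ncard_mul (fun F P ↦ P ≤ F) (fun F hF ↦ ?_) fun P hP ↦ ?_
  · rw [← hF.1.2, ← ncard_extensions hF.2]
    congr 2
    ext P
    exact ⟨fun h ↦ ⟨h.1.2, h.2, h.1.1.2⟩, fun h ↦ ⟨⟨⟨hF.1.1.mono h.2.1, h.2.2⟩, h.1⟩, h.2.1⟩⟩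
  · rw [← hc P hP]
    congr 2
    ext F
    exact ⟨fun h ↦ ⟨h.1.1, h.2⟩, fun h ↦ ⟨C3_anti hP.2 m h, h.2⟩⟩

variable {ν : ℕ}

lemma ncard_C3 (hf : f.IsAlt) (hf' : f.Nondegenerate) (hν : finrank K V = 2 * ν)
    (hA : A ∈ polar f a) (ham : a ≤ m) :
    ((C3 f A m).ncard : ℚ) = Nprime (Nat.card K) a m ν := by
  obtain ⟨hAiso, rfl⟩ := hA
  obtain ⟨k, hk⟩ := Nat.exists_eq_add_of_le ham
  induction k generalizing A with
  | zero => rw [hk, add_zero, C3_finrank hAiso, Nprime_self, Set.ncard_singleton, Nat.cast_one]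
  | succ k ih =>
    have hAν := hAiso.two_mul_finrank_le hf'
    have hpos : (qNumber (Nat.card K) (m - finrank K A) : ℚ) ≠ 0 := by
      exact_mod_cast (qNumber_pos (by lia)).ne'
    apply mul_right_cancel₀ hpos
    rw [Nprime_mul_qNumber Finite.one_lt_card (by lia) (by lia), ← hν]
    refine ncard_C3_mul_qNumber hf hf' hAiso fun P hP ↦ ?_
    have hPdim := hP.1.2
    rw [← hPdim]
    exact ih hP.1.1 (by lia) (by lia)

lemma ncard_C3_sdiff_C3 {b : ℕ} (hf : f.IsAlt) (hf' : f.Nondegenerate)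
    (hν : finrank K V = 2 * ν) (hA : A ∈ polar f a) (hAB : A ⊔ B ∈ polar f b) (hbm : b ≤ m) :
    ((C3 f A m \ C3 f B m).ncard : ℚ) =
      Nprime (Nat.card K) a m ν - Nprime (Nat.card K) b m ν := by
  have hab : a ≤ b := hA.2 ▸ hAB.2 ▸ Submodule.finrank_mono le_sup_left
  rw [← ncard_C3 hf hf' hν hA (hab.trans hbm), ← ncard_C3 hf hf' hν hAB hbm, ← C3_inter_C3,
    eq_sub_iff_add_eq']
  exact_mod_cast Set.ncard_inter_add_ncard_sdiff_eq_ncard _ _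

lemma ncard_C1_le (hf : f.IsAlt) (hf' : f.Nondegenerate) (hν : finrank K V = 2 * ν)
    (hM : TotallyIsotropic f M) (hTM : T ≤ M) (hT : finrank K T = t) (htm : t + 1 ≤ m) :
    ((C1 f M T m t).ncard : ℚ) ≤
      qNumber (Nat.card K) (finrank K M - t) * Nprime (Nat.card K) (t + 1) m ν := by
  subst hT
  rw [C1_eq_biUnion hTM, ← ncard_extensions hTM]
  exact ncard_biUnion_le_mul (Set.toFinite _) fun P hP ↦
    (ncard_C3 hf hf' hν ⟨hM.mono hP.2.1, hP.2.2⟩ htm).le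

-- The members of `C1` containing a fixed extension `P₀` of `T` are counted once; every other
-- extension only adds the members that avoid `P₀`.
lemma ncard_C1_le_sub {s : ℕ} (hf : f.IsAlt) (hf' : f.Nondegenerate) (hν : finrank K V = 2 * ν)
    (hM : M ∈ polar f (t + s + 1)) (hTM : T ≤ M) (hT : finrank K T = t) (htm : t + 2 ≤ m) :
    ((C1 f M T m t).ncard : ℚ) ≤
      qNumber (Nat.card K) (s + 1) * Nprime (Nat.card K) (t + 1) m ν -
        Nat.card K * qNumber (Nat.card K) s * Nprime (Nat.card K) (t + 2) m ν := by
  subst hT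
  obtain ⟨hMiso, hMdim⟩ := hM
  have hpolar : ∀ P ∈ extensions T M, P ∈ polar f (finrank K T + 1) :=
    fun P hP ↦ ⟨hMiso.mono hP.2.1, hP.2.2⟩
  obtain ⟨P₀, hP₀⟩ := extensions_nonempty hTM (by lia)
  have hcover : C1 f M T m (finrank K T) ⊆
      C3 f P₀ m ∪ ⋃ P ∈ extensions T M \ {P₀}, (C3 f P m \ C3 f P₀ m) := by
    rw [C1_eq_biUnion hTM]
    intro F hF
    obtain ⟨P, hP, hFP⟩ := Set.mem_iUnion₂.1 hF
    refine or_iff_not_imp_left.2 fun hFP₀ ↦ Set.mem_iUnion₂.2 ⟨P, ⟨hP, ?_⟩, hFP, hFP₀⟩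
    rintro rfl
    exact hFP₀ hFP
  have hrest : ((extensions T M \ {P₀}).ncard : ℚ) =
      Nat.card K * qNumber (Nat.card K) s := by
    rw [Set.ncard_sdiff_singleton_of_mem hP₀, ncard_extensions hTM, hMdim,
      show finrank K T + s + 1 - finrank K T = s + 1 by lia, qNumber_succ, Nat.add_sub_cancel,
      Nat.cast_mul]
  have hdiff : ∀ P ∈ extensions T M \ {P₀}, ((C3 f P m \ C3 f P₀ m).ncard : ℚ) ≤
      Nprime (Nat.card K) (finrank K T + 1) m ν - Nprime (Nat.card K) (finrank K T + 2) m ν :=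
    fun P hP ↦ (ncard_C3_sdiff_C3 hf hf' hν (hpolar P hP.1)
      ⟨hMiso.mono (sup_le hP.1.2.1 hP₀.2.1), finrank_sup_of_mem_extensions hP.1 hP₀ hP.2⟩
      htm).le
  have hunion := ncard_biUnion_le_mul (Set.toFinite _) hdiff
  have hle : ((C1 f M T m (finrank K T)).ncard : ℚ) ≤ (C3 f P₀ m).ncard +
      (⋃ P ∈ extensions T M \ {P₀}, (C3 f P m \ C3 f P₀ m)).ncard := by
    exact_mod_cast (Set.ncard_le_ncard hcover).trans (Set.ncard_union_le _ _)
  rw [hrest] at hunion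
  rw [ncard_C3 hf hf' hν (hpolar P₀ hP₀) (by lia)] at hle
  push_cast [qNumber_succ]
  linarith

lemma ncard_C2_le (hf : f.IsAlt) (hf' : f.Nondegenerate) (hν : finrank K V = 2 * ν)
    (hT : T ∈ polar f t) (htm : t ≤ m) (hM : finrank K M = m + 1) :
    ((C2 f M T m).ncard : ℚ) ≤ Nprime (Nat.card K) t m ν + qNumber (Nat.card K) (m + 1) := by
  have hsub : {F | F ∈ polar f m ∧ F ≤ M} ⊆ hyperplanes M :=
    fun F hF ↦ ⟨hF.2, by rw [hF.1.2, hM]⟩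
  have hinM := Set.ncard_le_ncard hsub
  rw [ncard_hyperplanes, hM] at hinM
  rw [← ncard_C3 hf hf' hν hT htm]
  exact_mod_cast (Set.ncard_union_le _ _).trans (Nat.add_le_add_left hinM _)

lemma ncard_C4 (hf : f.IsAlt) (hf' : f.Nondegenerate) (hν : finrank K V = 2 * ν)
    (hS : S ∈ polar f (t + 1)) (htm : t + 1 ≤ m) :
    ((C4 f S m t).ncard : ℚ) = Nprime (Nat.card K) (t + 1) m ν + qNumber (Nat.card K) (t + 1) *
      (Nprime (Nat.card K) t m ν - Nprime (Nat.card K) (t + 1) m ν) := by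
  have hSdim := hS.2
  have hdisj : Disjoint (C3 f S m) (⋃ H ∈ hyperplanes S, (C3 f H m \ C3 f S m)) :=
    Set.disjoint_iUnion₂_right.2 fun _ _ ↦ Set.disjoint_sdiff_right
  have hdiff : ∀ H ∈ hyperplanes S, ((C3 f H m \ C3 f S m).ncard : ℚ) =
      Nprime (Nat.card K) t m ν - Nprime (Nat.card K) (t + 1) m ν := by
    intro H ⟨hHS, hHdim⟩
    exact ncard_C3_sdiff_C3 hf hf' hν ⟨hS.1.mono hHS, by lia⟩ (by rwa [sup_eq_right.2 hHS]) htm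
  rw [C4_eq_union hSdim, Set.ncard_union_eq hdisj, Nat.cast_add, ncard_C3 hf hf' hν hS htm,
    ncard_biUnion_eq_mul (Set.toFinite _) (pairwiseDisjoint_C3_sdiff_C3 f S m) hdiff,
    ncard_hyperplanes, hSdim]

end Isotropic

section Estimates

variable {q ν m m₁ t : ℕ}

lemma qNumber_mul_Nprime_add_lt (hq : 2 ≤ q) (htm : t < m) (hν : 3 * m + 2 ≤ 2 * ν) :
    qNumber q t * (Nprime q t m ν + qNumber q (m + 1)) <
      Nprime q (t + 1) m ν +
        qNumber q (t + 1) * (Nprime q t m ν - Nprime q (t + 1) m ν) := by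
  have hm : m ≤ ν := by lia
  have hone : 1 ≤ Nprime q (t + 1) m ν := one_le_Nprime hq hm
  have hratio : (q : ℚ) ^ (m + 2) * Nprime q (t + 1) m ν ≤ Nprime q t m ν :=
    pow_mul_Nprime_succ_le hq htm hm (by lia)
  have hpow : (qNumber q (m + 1) : ℚ) + q ≤ q ^ (m + 2) := by
    have := qNumber_lt_pow hq (m + 1)
    have := Nat.le_self_pow m.succ_ne_zero q
    have : 2 * q ^ (m + 1) ≤ q ^ (m + 2) := by rw [pow_succ' q (m + 1)]; gcongr
    exact_mod_cast (by lia : qNumber q (m + 1) + q ≤ q ^ (m + 2))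
  have hsmall : (qNumber q (m + 1) : ℚ) + q * Nprime q (t + 1) m ν ≤ Nprime q t m ν := by
    have : (0 : ℚ) ≤ qNumber q (m + 1) := by positivity
    nlinarith
  have hlt : (qNumber q t : ℚ) < q ^ t := by exact_mod_cast qNumber_lt_pow hq t
  have hkey : qNumber q t * (qNumber q (m + 1) + q * Nprime q (t + 1) m ν) <
      q ^ t * Nprime q t m ν := by
    have hpos : 0 < Nprime q t m ν := Nprime_pos hq hm
    calc _ ≤ qNumber q t * Nprime q t m ν := by gcongr
      _ < _ := by gcongr
  have hsucc : (qNumber q (t + 1) : ℚ) = q * qNumber q t + 1 := by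
    exact_mod_cast qNumber_succ q t
  have hsucc' : (qNumber q (t + 1) : ℚ) = qNumber q t + q ^ t := by
    exact_mod_cast qNumber_succ' q t
  linear_combination hkey + Nprime q (t + 1) m ν * hsucc - Nprime q t m ν * hsucc'

lemma sq_mul_qNumber_mul_Nprime_lt (hq : 2 ≤ q) (htm : t < m) (hm : m ≤ ν) (htm₁ : t + 1 < m₁)
    (hm₁ : m₁ ≤ ν) :
    q ^ 2 * qNumber q (m₁ - (t + 1)) * Nprime q (t + 1) m₁ ν * Nprime q (t + 1) m ν <
      qNumber q (m - t) * Nprime q (t + 2) m₁ ν * Nprime q t m ν := by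
  set g := 2 * ν - 2 * (t + 1)
  have hrec := Nprime_mul_qNumber (ν := ν) hq htm (by lia)
  have hrec₁ := Nprime_mul_qNumber (ν := ν) hq htm₁ (by lia)
  rw [show 2 * ν - 2 * t = g + 2 by lia] at hrec
  have hlt : (q : ℚ) ^ 2 * qNumber q g < qNumber q (g + 2) := by
    rw [qNumber_succ, qNumber_succ]
    push_cast
    nlinarith
  have hpos : 0 < Nprime q (t + 1) m ν := Nprime_pos hq hm
  have hpos₁ : 0 < Nprime q (t + 2) m₁ ν := Nprime_pos hq hm₁
  calc _ = q ^ 2 * qNumber q g * (Nprime q (t + 2) m₁ ν * Nprime q (t + 1) m ν) := by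
        linear_combination (q : ℚ) ^ 2 * Nprime q (t + 1) m ν * hrec₁
    _ < qNumber q (g + 2) * (Nprime q (t + 2) m₁ ν * Nprime q (t + 1) m ν) := by gcongr
    _ = _ := by linear_combination -Nprime q (t + 2) m₁ ν * hrec

lemma qNumber_mul_qNumber_add_le_of_two_le {p : ℕ} (hq : 2 ≤ q) (ht : 2 ≤ t)
    (hν : 6 * t + 2 ≤ 2 * ν) (hp : t ≤ p + 1) :
    qNumber q (t + 1) * qNumber q (2 * t + 1) + q * qNumber q t * Nprime q (t + 1) (2 * t) ν ≤
      q ^ 3 * qNumber q p * Nprime q (t + 1) (2 * t) ν := by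
  have hcoeff : q * qNumber q t + q ≤ q ^ 3 * qNumber q p := by
    obtain ⟨s, rfl⟩ := Nat.exists_eq_add_of_le' (show 1 ≤ t by lia)
    have hs : 1 ≤ qNumber q s := qNumber_pos (by lia)
    have hs2 : 2 ≤ q * qNumber q s := Nat.mul_le_mul hq hs
    calc q * qNumber q (s + 1) + q = q * (q * qNumber q s + 2) := by
          rw [qNumber_succ]; ring
      _ ≤ q * (q * (q * qNumber q s)) := by
        gcongr
        nlinarith [Nat.mul_le_mul_right (q * qNumber q s) hq]
      _ = q ^ 3 * qNumber q s := by ring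
      _ ≤ _ := by gcongr; exact qNumber_mono q (by lia)
  have hprod : qNumber q (t + 1) * qNumber q (2 * t + 1) ≤ q * q ^ (3 * t + 1) :=
    calc _ ≤ q ^ (t + 1) * q ^ (2 * t + 1) := by
          gcongr <;> exact (qNumber_lt_pow hq _).le
      _ = _ := by ring
  have hlarge : (q : ℚ) ^ (3 * t + 1) ≤ Nprime q (t + 1) (2 * t) ν :=
    (le_mul_of_one_le_right (by positivity) (one_le_Nprime hq (by lia))).trans
      (pow_mul_Nprime_succ_le hq (by lia) (by lia) (by lia))
  have hpos : 0 < Nprime q (t + 1) (2 * t) ν := Nprime_pos hq (by lia)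
  calc _ ≤ (q : ℚ) * q ^ (3 * t + 1) + q * qNumber q t * Nprime q (t + 1) (2 * t) ν := by
        gcongr ?_ + _
        exact_mod_cast hprod
    _ ≤ q * Nprime q (t + 1) (2 * t) ν + q * qNumber q t * Nprime q (t + 1) (2 * t) ν := by
        gcongr
    _ = (q * qNumber q t + q : ℕ) * Nprime q (t + 1) (2 * t) ν := by push_cast; ring
    _ ≤ (q ^ 3 * qNumber q p : ℕ) * Nprime q (t + 1) (2 * t) ν := by gcongr
    _ = _ := by push_cast; ring

lemma qNumber_two_mul_qNumber_three_add_le {p : ℕ} (hq : 2 ≤ q) (hp : 2 ≤ p) :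
    qNumber q 2 * qNumber q 3 + q ≤ q ^ 3 * qNumber q p := by
  have h2 : qNumber q 2 = q + 1 := by simp [qNumber, sum_range_succ, add_comm]
  have h3 : qNumber q 3 + 1 ≤ q ^ 3 := by
    rw [qNumber_succ, h2]
    nlinarith [Nat.mul_le_mul_right q hq, Nat.mul_le_mul_right (q * q) hq]
  calc qNumber q 2 * qNumber q 3 + q ≤ qNumber q 2 * (qNumber q 3 + 1) := by lia
    _ ≤ qNumber q p * q ^ 3 := by gcongr; exact qNumber_mono q hp
    _ = q ^ 3 * qNumber q p := mul_comm _ _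

lemma qNumber_mul_qNumber_add_le {p : ℕ} (hq : 2 ≤ q) (ht : 1 ≤ t) (hν : 6 * t + 2 ≤ 2 * ν)
    (hp : t ≤ p + 1) (hone : t = 1 → 2 ≤ p) :
    qNumber q (t + 1) * qNumber q (2 * t + 1) + q * qNumber q t * Nprime q (t + 1) (2 * t) ν ≤
      q ^ 3 * qNumber q p * Nprime q (t + 1) (2 * t) ν := by
  obtain rfl | ht2 := ht.eq_or_lt
  · have hone' : qNumber q 1 = 1 := by simp [qNumber]
    simp only [Nprime_self, hone', Nat.cast_one, mul_one]
    exact_mod_cast qNumber_two_mul_qNumber_three_add_le hq (hone rfl)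
  · exact qNumber_mul_qNumber_add_le_of_two_le hq ht2 hν hp

lemma sub_mul_Nprime_add_lt (hq : 2 ≤ q) (ht : 1 ≤ t) (hν : 6 * t + 2 ≤ 2 * ν) (hm₁ : m₁ ≤ ν)
    (htm₁ : 2 * t ≤ m₁) (hone : t = 1 → 4 ≤ m₁) :
    (qNumber q (t + 1) * Nprime q (t + 1) m₁ ν - q * qNumber q t * Nprime q (t + 2) m₁ ν) *
        (Nprime q t (2 * t) ν + qNumber q (2 * t + 1)) <
      Nprime q (t + 1) m₁ ν * (Nprime q (t + 1) (2 * t) ν +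
        qNumber q (t + 1) * (Nprime q t (2 * t) ν - Nprime q (t + 1) (2 * t) ν)) := by
  have hcross := sq_mul_qNumber_mul_Nprime_lt (m := 2 * t) (ν := ν) hq (by lia) (by lia)
    (show t + 1 < m₁ by lia) hm₁
  rw [show 2 * t - t = t by lia] at hcross
  set p := m₁ - (t + 1)
  have hsecond := qNumber_mul_qNumber_add_le (p := p) hq ht hν (by lia) (by lia)
  have hpos : 0 < Nprime q (t + 1) m₁ ν := Nprime_pos hq hm₁
  have hpos' : 0 < Nprime q (t + 2) m₁ ν := Nprime_pos hq hm₁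
  have hsucc : (qNumber q (t + 1) : ℚ) = q * qNumber q t + 1 := by
    exact_mod_cast qNumber_succ q t
  have hkey : Nprime q (t + 1) m₁ ν * (qNumber q (t + 1) * qNumber q (2 * t + 1) +
      q * qNumber q t * Nprime q (t + 1) (2 * t) ν) <
      q * qNumber q t * Nprime q (t + 2) m₁ ν *
        (Nprime q t (2 * t) ν + qNumber q (2 * t + 1)) :=
    calc _ ≤ Nprime q (t + 1) m₁ ν * (q ^ 3 * qNumber q p * Nprime q (t + 1) (2 * t) ν) := by
          gcongr
      _ = q * (q ^ 2 * qNumber q p * Nprime q (t + 1) m₁ ν * Nprime q (t + 1) (2 * t) ν) := by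
          ring
      _ < q * (qNumber q t * Nprime q (t + 2) m₁ ν * Nprime q t (2 * t) ν) := by gcongr
      _ = q * qNumber q t * Nprime q (t + 2) m₁ ν * Nprime q t (2 * t) ν := by ring
      _ ≤ _ := by
          gcongr
          exact le_add_of_nonneg_right (by positivity)
  linear_combination hkey + Nprime q (t + 1) m₁ ν * Nprime q (t + 1) (2 * t) ν * hsucc

end Estimates

section Comparison

variable [FiniteDimensional K V] [Finite K] {f : LinearMap.BilinForm K V} {M T S : Submodule K V}
  {ν m₁ m₂ t : ℕ}

lemma ncard_C1_mul_ncard_C2_lt_of_lt_two_mul (hf : f.IsAlt) (hf' : f.Nondegenerate)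
    (hν : finrank K V = 2 * ν) (hm₁ : t + 1 ≤ m₁) (hm₁ν : m₁ ≤ ν) (hm₂ : t + 1 ≤ m₂)
    (hm₂ν : 3 * m₂ + 2 ≤ 2 * ν) (hlt : m₂ < 2 * t) (hM : M ∈ polar f (m₂ + 1)) (hTM : T ≤ M)
    (hT : finrank K T = t) (hS : S ∈ polar f (t + 1)) :
    (C1 f M T m₁ t).ncard * (C2 f M T m₂).ncard <
      (C3 f S m₁).ncard * (C4 f S m₂ t).ncard := by
  have hq : 2 ≤ Nat.card K := Finite.one_lt_card
  have hpos : 0 < Nprime (Nat.card K) (t + 1) m₁ ν := Nprime_pos hq hm₁ν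
  have hC1 : ((C1 f M T m₁ t).ncard : ℚ) ≤
      qNumber (Nat.card K) t * Nprime (Nat.card K) (t + 1) m₁ ν := by
    refine (ncard_C1_le hf hf' hν hM.1 hTM hT hm₁).trans ?_
    gcongr
    exact qNumber_mono _ (by rw [hM.2]; lia)
  have hC2 := ncard_C2_le hf hf' hν ⟨hM.1.mono hTM, hT⟩ (by lia) hM.2
  have hcompare := qNumber_mul_Nprime_add_lt hq hm₂ hm₂ν
  rw [← Nat.cast_lt (α := ℚ), Nat.cast_mul, Nat.cast_mul, ncard_C3 hf hf' hν hS hm₁,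
    ncard_C4 hf hf' hν hS hm₂]
  calc _ ≤ qNumber (Nat.card K) t * Nprime (Nat.card K) (t + 1) m₁ ν *
        (Nprime (Nat.card K) t m₂ ν + qNumber (Nat.card K) (m₂ + 1)) := by gcongr
    _ = Nprime (Nat.card K) (t + 1) m₁ ν * (qNumber (Nat.card K) t *
        (Nprime (Nat.card K) t m₂ ν + qNumber (Nat.card K) (m₂ + 1))) := by ring
    _ < _ := by gcongr

lemma ncard_C1_mul_ncard_C2_lt_of_eq_two_mul (hf : f.IsAlt) (hf' : f.Nondegenerate)
    (hν : finrank K V = 2 * ν) (ht : 1 ≤ t) (hm₁ : 2 * t ≤ m₁) (hone : t = 1 → 4 ≤ m₁)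
    (hm₁ν : m₁ ≤ ν) (htν : 6 * t + 2 ≤ 2 * ν) (hM : M ∈ polar f (2 * t + 1)) (hTM : T ≤ M)
    (hT : finrank K T = t) (hS : S ∈ polar f (t + 1)) :
    (C1 f M T m₁ t).ncard * (C2 f M T (2 * t)).ncard <
      (C3 f S m₁).ncard * (C4 f S (2 * t) t).ncard := by
  have hC1 := ncard_C1_le_sub (s := t) (m := m₁) hf hf' hν (two_mul t ▸ hM) hTM hT (by lia)
  have hC2 := ncard_C2_le hf hf' hν ⟨hM.1.mono hTM, hT⟩ (by lia) hM.2
  rw [← Nat.cast_lt (α := ℚ), Nat.cast_mul, Nat.cast_mul, ncard_C3 hf hf' hν hS (by lia),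
    ncard_C4 hf hf' hν hS (by lia)]
  exact (mul_le_mul hC1 hC2 (Nat.cast_nonneg _) ((Nat.cast_nonneg _).trans hC1)).trans_lt
    (sub_mul_Nprime_add_lt Finite.one_lt_card ht htν hm₁ν hm₁ hone)

end Comparison

theorem stmt_16_general {K V : Type*} [Field K] [Finite K] [AddCommGroup V] [Module K V]
    [FiniteDimensional K V] {f : LinearMap.BilinForm K V} (hf : f.IsAlt) (hf' : f.Nondegenerate)
    {ν m₁ m₂ t : ℕ} (hν : finrank K V = 2 * ν) (hm : m₂ ≤ m₁) (hmt : t + 1 ≤ m₂)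
    (hm₁ : m₁ ≤ ν) (hm₂ : 3 * m₂ + 2 ≤ 2 * ν)
    (hcase : m₂ ≤ 2 * t ∧ (m₁, m₂, t) ≠ (2, 2, 1) ∧ (m₁, m₂, t) ≠ (3, 2, 1))
    {M T S : Submodule K V} (hM : M ∈ polar f (m₂ + 1)) (hTM : T ≤ M) (hT : finrank K T = t)
    (hS : S ∈ polar f (t + 1)) :
    (C1 f M T m₁ t).ncard * (C2 f M T m₂).ncard <
      (C3 f S m₁).ncard * (C4 f S m₂ t).ncard := by
  obtain ⟨hle, hne2, hne3⟩ := hcase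
  simp only [ne_eq, Prod.mk.injEq] at hne2 hne3
  obtain hlt | rfl := hle.lt_or_eq
  · exact ncard_C1_mul_ncard_C2_lt_of_lt_two_mul hf hf' hν (by lia) hm₁ hmt hm₂ hlt hM hTM hT hS
  · exact ncard_C1_mul_ncard_C2_lt_of_eq_two_mul hf hf' hν (by lia) hm (by lia) hm₁ (by lia) hM
      hTM hT hS

theorem stmt_16
    (q ν m₁ m₂ t : ℕ) (hq : IsPrimePow q)
    {K : Type} [Field K] [Fintype K] (hK : Fintype.card K = q)
    (f : (Fin (2 * ν) → K) →ₗ[K] (Fin (2 * ν) → K) →ₗ[K] K)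
    (halt : ∀ v, f v v = 0)
    (hnd : ∀ v, (∀ w, f v w = 0) → v = 0)
    (hν : 0 < ν) (ht : 0 < t) (hm : m₂ ≤ m₁) (hmt : t + 1 ≤ m₂)
    (hdim : 2 * m₁ + m₂ + t + 2 ≤ 2 * ν)
    (hcase : m₂ ≤ 2 * t ∧ (m₁, m₂, t) ≠ (2, 2, 1) ∧ (m₁, m₂, t) ≠ (3, 2, 1))
    (M : Submodule K (Fin (2 * ν) → K)) (hM : M ∈ polar f (m₂ + 1))
    (T : Submodule K (Fin (2 * ν) → K)) (hTM : T ≤ M) (hT : finrank K T = t)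
    (S : Submodule K (Fin (2 * ν) → K)) (hS : S ∈ polar f (t + 1)) :
    (C1 f M T m₁ t).ncard * (C2 f M T m₂).ncard <
      (C3 f S m₁).ncard * (C4 f S m₂ t).ncard := by
  have hf : LinearMap.IsAlt f := halt
  exact stmt_16_general (ν := ν) hf (hf.isRefl.nondegenerate_iff_separatingLeft.2 hnd) (by simp)
    hm hmt (by lia) (by lia) hcase hM hTM hT hS

end
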